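/- Let θ ∈ (0,π). The witness W_II(θ) is optimal: for every positive semidefinite 16×16 matrix D with D ≠ 0 and every λ > 0, the matrix W_II(θ) − λ·D is not block positive (i.e. there exist x,y : Fin 4 → ℂ with Re⟨x⊗y, (W_II(θ) − λD)(x⊗y)⟩ < 0). -/

import Mathlib

open Matrix Complex Real

/-- The tensor (product) vector `x ⊗ y` in `ℂ¹⁶`. -/
noncomputable def tensorVec (x y : Fin 4 → ℂ) : Fin 4 × Fin 4 → ℂ :=
  fun p => x p.1 * y p.2

/-- The expectation `⟨v, W v⟩ = ∑ i, conj (v i) * (W *ᵥ v) i`. -/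
noncomputable def expec (W : Matrix (Fin 4 × Fin 4) (Fin 4 × Fin 4) ℂ)
    (v : Fin 4 × Fin 4 → ℂ) : ℂ :=
  ∑ i, star (v i) * W.mulVec v i

/-- The Bell-diagonal matrix `W[a,b,c,d]` with `(α₀,α₁,α₂,α₃) = (a,b,c,d)`:
`W((k,m),(k',m')) = α_{(m−k) mod 4}` if `k=k', m=m'`; `−1` if `k=m, k'=m', k≠k'`;
`0` otherwise. -/
noncomputable def Wabcd (a b c d : ℝ) : Matrix (Fin 4 × Fin 4) (Fin 4 × Fin 4) ℂ :=
  fun p q =>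
    if p.1 = q.1 ∧ p.2 = q.2 then ((![a, b, c, d] (p.2 - p.1) : ℝ) : ℂ)
    else if p.1 = p.2 ∧ q.1 = q.2 ∧ p.1 ≠ q.1 then -1
    else 0

/-- The class-I witness `W_I(θ)`. -/
noncomputable def WI (θ : ℝ) : Matrix (Fin 4 × Fin 4) (Fin 4 × Fin 4) ℂ :=
  Wabcd ((2 - Real.sin θ) / 2) ((1 + Real.cos θ) / 2)
        (2 - (2 - Real.sin θ) / 2) (1 - (1 + Real.cos θ) / 2)

/-- The class-II witness `W_II(θ)`. -/
noncomputable def WII (θ : ℝ) : Matrix (Fin 4 × Fin 4) (Fin 4 × Fin 4) ℂ :=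
  Wabcd ((1 + Real.cos θ) / 2) ((2 - Real.sin θ) / 2)
        (1 - (1 + Real.cos θ) / 2) (2 - (2 - Real.sin θ) / 2)

/-- The maximally entangled vector `Ψ(j,j') = (−1)^{j+1}/2` if `j = j'`, else `0`. -/
noncomputable def PsiVec : Fin 4 × Fin 4 → ℂ :=
  fun p => if p.1 = p.2 then ((-1 : ℂ) ^ ((p.1 : ℕ) + 1)) / 2 else 0

/-- The rank-one projector `P = |Ψ⟩⟨Ψ|`. -/
noncomputable def Pmat : Matrix (Fin 4 × Fin 4) (Fin 4 × Fin 4) ℂ :=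
  fun u v => PsiVec u * star (PsiVec v)

open scoped ComplexOrder

/-!
Suppose `W - λD` is block positive with `D ≥ 0`. Every product vector on which `W` has zero
expectation then lies in `ker D`. For `W = W[a,b,c,d]` with `a + c = 1` and `b + d = 2`, the zeros
`x ⊗ x̄` with `x` unimodular span all `e_k ⊗ e_m` with `k ≠ m`, and the zeros supported on
`{k, k + 2}` give `e_k ⊗ e_k + e_{k+2} ⊗ e_{k+2} ∈ ker D`. Zeros alone need not span, so the
remaining vectors are reached along curves: there are product vectors congruent to
`ε² e_{k+1} ⊗ e_{k+1}` modulo `ker D` whose `W`-expectation is `O(ε⁶)`, while their `D`-expectation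
is `ε⁴ ⟨e_{k+1} ⊗ e_{k+1}, D (e_{k+1} ⊗ e_{k+1})⟩`. Letting `ε → 0` forces `D = 0`.
-/

/-- Block positivity: nonnegativity of the expectation on every product vector. -/
def IsBlockPositive (W : Matrix (Fin 4 × Fin 4) (Fin 4 × Fin 4) ℂ) : Prop :=
  ∀ x y : Fin 4 → ℂ, 0 ≤ (expec W (tensorVec x y)).re

section QuadraticForm

variable {ι : Type*} [Fintype ι] {D : Matrix ι ι ℂ} {v w : ι → ℂ}

theorem mulVec_eq_zero_of_re_dotProduct_nonpos (hD : D.PosSemidef)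
    (hv : (star v ⬝ᵥ D *ᵥ v).re ≤ 0) : D *ᵥ v = 0 := by
  have hnonneg := Complex.le_def.1 (hD.dotProduct_mulVec_nonneg v)
  exact (hD.dotProduct_mulVec_zero_iff v).1 (Complex.ext (hv.antisymm hnonneg.1) hnonneg.2.symm)

theorem star_dotProduct_mulVec_congr (hD : D.IsHermitian) (h : D *ᵥ v = D *ᵥ w) :
    star v ⬝ᵥ D *ᵥ v = star w ⬝ᵥ D *ᵥ w := by
  have star_vecMul (u : ι → ℂ) : star u ᵥ* D = star (D *ᵥ u) := by rw [star_mulVec, hD.eq]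
  calc star v ⬝ᵥ D *ᵥ v = star v ⬝ᵥ D *ᵥ w := by rw [h]
    _ = star (D *ᵥ v) ⬝ᵥ w := by rw [dotProduct_mulVec, star_vecMul]
    _ = star w ⬝ᵥ D *ᵥ w := by rw [h, ← star_vecMul, ← dotProduct_mulVec]

theorem star_smul_dotProduct_mulVec_smul (c : ℂ) :
    star (c • v) ⬝ᵥ D *ᵥ (c • v) = (normSq c : ℂ) * (star v ⬝ᵥ D *ᵥ v) := by
  rw [mulVec_smul, star_smul, smul_dotProduct, dotProduct_smul, smul_smul, smul_eq_mul,
    Complex.star_def, normSq_eq_conj_mul_self]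

theorem star_dotProduct_diagonal_mulVec [DecidableEq ι] (α : ι → ℝ) :
    star v ⬝ᵥ diagonal (fun i ↦ (α i : ℂ)) *ᵥ v = ∑ i, ((α i * normSq (v i) : ℝ) : ℂ) := by
  refine Finset.sum_congr rfl fun i _ ↦ ?_
  rw [mulVec_diagonal, Pi.star_apply, Complex.star_def, ofReal_mul, normSq_eq_conj_mul_self]
  ring

theorem star_dotProduct_vecMulVec_star_mulVec (u : ι → ℂ) :
    star v ⬝ᵥ vecMulVec u (star u) *ᵥ v = (normSq (star u ⬝ᵥ v) : ℂ) := by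
  rw [vecMulVec_mulVec, dotProduct_smul, star_dotProduct v u, op_smul_eq_mul,
    Complex.star_def, normSq_eq_conj_mul_self]

end QuadraticForm

section Subtraction

open Asymptotics Filter Topology

theorem expec_sub_smul_re (W D : Matrix (Fin 4 × Fin 4) (Fin 4 × Fin 4) ℂ) (lam : ℝ)
    (v : Fin 4 × Fin 4 → ℂ) :
    (expec (W - (lam : ℂ) • D) v).re = (expec W v).re - lam * (expec D v).re := by
  change (star v ⬝ᵥ (W - (lam : ℂ) • D) *ᵥ v).re =
    (star v ⬝ᵥ W *ᵥ v).re - lam * (star v ⬝ᵥ D *ᵥ v).re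
  rw [sub_mulVec, smul_mulVec, dotProduct_sub, dotProduct_smul, sub_re, smul_eq_mul,
    re_ofReal_mul]

variable {W D : Matrix (Fin 4 × Fin 4) (Fin 4 × Fin 4) ℂ} {lam : ℝ}

theorem IsBlockPositive.mul_expec_re_le (hW : IsBlockPositive (W - (lam : ℂ) • D))
    (x y : Fin 4 → ℂ) :
    lam * (expec D (tensorVec x y)).re ≤ (expec W (tensorVec x y)).re :=
  sub_nonneg.1 (expec_sub_smul_re W D lam _ ▸ hW x y)

theorem IsBlockPositive.mulVec_tensorVec_eq_zero (hD : D.PosSemidef) (hlam : 0 < lam)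
    (hW : IsBlockPositive (W - (lam : ℂ) • D)) {x y : Fin 4 → ℂ}
    (hxy : (expec W (tensorVec x y)).re ≤ 0) : D *ᵥ tensorVec x y = 0 :=
  mulVec_eq_zero_of_re_dotProduct_nonpos hD <|
    nonpos_of_mul_nonpos_right ((hW.mul_expec_re_le x y).trans hxy) hlam

theorem IsBlockPositive.mulVec_eq_zero_of_isLittleO (hD : D.PosSemidef) (hlam : 0 < lam)
    (hW : IsBlockPositive (W - (lam : ℂ) • D)) {x y : ℝ → Fin 4 → ℂ} {w : Fin 4 × Fin 4 → ℂ}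
    {n : ℕ} (hcongr : ∀ ε : ℝ, D *ᵥ tensorVec (x ε) (y ε) = D *ᵥ (((ε ^ n : ℝ) : ℂ) • w))
    (hsmall : (fun ε ↦ (expec W (tensorVec (x ε) (y ε))).re) =o[𝓝[≠] 0] fun ε ↦ (ε ^ n) ^ 2) :
    D *ᵥ w = 0 := by
  have hlimit := hsmall.tendsto_div_nhds_zero
  have hbound : ∀ᶠ ε : ℝ in 𝓝[≠] 0,
      lam * (expec D w).re ≤ (expec W (tensorVec (x ε) (y ε))).re / (ε ^ n) ^ 2 := by
    filter_upwards [self_mem_nhdsWithin] with ε hε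
    have hexpec : (expec D (tensorVec (x ε) (y ε))).re = (ε ^ n) ^ 2 * (expec D w).re := by
      have h : expec D (tensorVec (x ε) (y ε)) = (normSq ((ε ^ n : ℝ) : ℂ) : ℂ) * expec D w :=
        (star_dotProduct_mulVec_congr hD.isHermitian (hcongr ε)).trans
          (star_smul_dotProduct_mulVec_smul _)
      rw [h, re_ofReal_mul, normSq_ofReal, sq]
    have hpos : 0 < (ε ^ n) ^ 2 := sq_pos_iff.2 (pow_ne_zero n hε)
    rw [le_div_iff₀ hpos, mul_assoc, mul_comm _ ((ε ^ n) ^ 2), ← hexpec]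
    exact hW.mul_expec_re_le _ _
  exact mulVec_eq_zero_of_re_dotProduct_nonpos hD <|
    nonpos_of_mul_nonpos_right (ge_of_tendsto hlimit hbound) hlam

end Subtraction

/-- The unnormalised maximally entangled vector `∑ k, e_k ⊗ e_k`, which carries the off-diagonal
part of `W[a,b,c,d]`. -/
def diagVec : Fin 4 × Fin 4 → ℂ := fun p ↦ if p.1 = p.2 then 1 else 0

theorem Wabcd_eq_diagonal_sub_vecMulVec (a b c d : ℝ) :
    Wabcd a b c d = diagonal (fun p ↦ ((![a + 1, b, c, d] (p.2 - p.1) : ℝ) : ℂ)) -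
      vecMulVec diagVec (star diagVec) := by
  ext ⟨k, m⟩ ⟨k', m'⟩
  have offset_entry (j : Fin 4) :
      ![a + 1, b, c, d] j = ![a, b, c, d] j + if j = 0 then 1 else 0 := by
    fin_cases j <;> simp
  by_cases hkm : k = m <;> by_cases hkm' : k' = m' <;> by_cases hkk' : k = k' <;>
    by_cases hmm' : m = m' <;>
    simp_all [Wabcd, diagVec, vecMulVec_apply, sub_eq_zero, eq_comm]

theorem star_diagVec_dotProduct (v : Fin 4 × Fin 4 → ℂ) :
    star diagVec ⬝ᵥ v = ∑ k, v (k, k) := by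
  simp [dotProduct, diagVec, Fintype.sum_prod_type, apply_ite]

theorem expec_Wabcd (a b c d : ℝ) (v : Fin 4 × Fin 4 → ℂ) :
    expec (Wabcd a b c d) v =
      ∑ p, ((![a + 1, b, c, d] (p.2 - p.1) * normSq (v p) : ℝ) : ℂ) -
        (normSq (∑ k, v (k, k)) : ℂ) := by
  change star v ⬝ᵥ Wabcd a b c d *ᵥ v = _
  rw [Wabcd_eq_diagonal_sub_vecMulVec, sub_mulVec, dotProduct_sub,
    star_dotProduct_diagonal_mulVec, star_dotProduct_vecMulVec_star_mulVec,
    star_diagVec_dotProduct]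

theorem expec_Wabcd_tensorVec_re (a b c d : ℝ) (x y : Fin 4 → ℂ) :
    (expec (Wabcd a b c d) (tensorVec x y)).re =
      ∑ k, ∑ m, ![a + 1, b, c, d] (m - k) * (normSq (x k) * normSq (y m)) -
        normSq (∑ k, x k * y k) := by
  simp only [expec_Wabcd, tensorVec, normSq_mul, ← ofReal_sum, ← ofReal_sub, ofReal_re,
    Fintype.sum_prod_type]

theorem sum_comp_sub_right {G M : Type*} [AddGroup G] [Fintype G] [AddCommMonoid M] (f : G → M)
    (k : G) : ∑ j, f (j - k) = ∑ j, f j :=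
  Equiv.sum_comp (Equiv.subRight k) f

theorem expec_Wabcd_tensorVec_shift_re (a b c d : ℝ) (x y : Fin 4 → ℂ) (k : Fin 4) :
    (expec (Wabcd a b c d) (tensorVec (fun j ↦ x (j - k)) (fun j ↦ y (j - k)))).re =
      (expec (Wabcd a b c d) (tensorVec x y)).re := by
  rw [expec_Wabcd_tensorVec_re, expec_Wabcd_tensorVec_re, sum_comp_sub_right fun j ↦ x j * y j]
  congr 1
  symm
  rw [← sum_comp_sub_right _ k]
  refine Finset.sum_congr rfl fun j _ ↦ ?_
  rw [← sum_comp_sub_right _ k]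
  simp only [sub_sub_sub_cancel_right]

theorem expec_Wabcd_unimodular_re {a b c d : ℝ} (hsum : a + b + c + d = 3) {x : Fin 4 → ℂ}
    (hx : ∀ j, normSq (x j) = 1) : (expec (Wabcd a b c d) (tensorVec x (star x))).re = 0 := by
  have offset_sum (k : Fin 4) : ∑ m, ![a + 1, b, c, d] (m - k) = 4 := by
    rw [sum_comp_sub_right ![a + 1, b, c, d], Fin.sum_univ_four]
    exact (show a + 1 + b + c + d = 4 by linarith)
  simp only [expec_Wabcd_tensorVec_re, Pi.star_apply, Complex.star_def, normSq_conj, hx, mul_one,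
    offset_sum, mul_conj, ofReal_one]
  norm_num

/-- The vector with entries `z` at `k`, `w` at `m` and `1` elsewhere, unimodular when `z` and `w`
are phases; averaging over the phases isolates `e_k ⊗ e_m`. When `k = m` the entry is `z`. -/
def phaseVec (k m : Fin 4) (z w : ℂ) : Fin 4 → ℂ :=
  fun j ↦ if j = k then z else if j = m then w else 1

/- With `x = phaseVec k m z w`, only the entry `x k * conj (x m)` of
`x ⊗ x̄` is proportional to `z * conj w`. Signs suffice for `w`, since fourth roots `z` already
separate `z * conj w` from `w * conj z`. -/
theorem single_eq_sum_phaseVec {k m : Fin 4} (hkm : k ≠ m) :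
    (Pi.single (k, m) 1 : Fin 4 × Fin 4 → ℂ) =
      (1 / 8 : ℂ) • ∑ s : Fin 4, ∑ t : Fin 2, (star (I ^ (s : ℕ)) * (-1) ^ (t : ℕ)) •
        tensorVec (phaseVec k m (I ^ (s : ℕ)) ((-1) ^ (t : ℕ)))
          (star (phaseVec k m (I ^ (s : ℕ)) ((-1) ^ (t : ℕ)))) := by
  ext ⟨j, l⟩
  have hmk := hkm.symm
  by_cases hjk : j = k <;> by_cases hlk : l = k <;> by_cases hjm : j = m <;>
    by_cases hlm : l = m <;>
    simp_all [tensorVec, phaseVec, Fin.sum_univ_four, pow_succ] <;> ring_nf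

section Kernel

variable {K : Submodule ℂ (Fin 4 × Fin 4 → ℂ)}

theorem single_mem_of_unimodular_mem
    (hK : ∀ x : Fin 4 → ℂ, (∀ j, normSq (x j) = 1) → tensorVec x (star x) ∈ K)
    {k m : Fin 4} (hkm : k ≠ m) : Pi.single (k, m) 1 ∈ K := by
  rw [single_eq_sum_phaseVec hkm]
  refine K.smul_mem _ <| K.sum_mem fun s _ ↦ K.sum_mem fun t _ ↦ K.smul_mem _ <| hK _ fun j ↦ ?_
  unfold phaseVec
  split_ifs <;> simp

theorem mem_of_diag_eq_zero (hK : ∀ k m : Fin 4, k ≠ m → Pi.single (k, m) 1 ∈ K)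
    {v : Fin 4 × Fin 4 → ℂ} (hv : ∀ k, v (k, k) = 0) : v ∈ K := by
  rw [pi_eq_sum_univ' v]
  refine K.sum_mem fun ⟨k, m⟩ _ ↦ ?_
  by_cases hkm : k = m
  · rw [← hkm, hv, zero_smul]
    exact K.zero_mem
  · exact K.smul_mem _ (hK k m hkm)

end Kernel

/-- The vector `(1 + δ, ε, 1 - δ, 0)`, cyclically shifted to start at position `k`. Paired
with the same vector for `-δ`, it perturbs the zero of `W[a,b,c,d]` supported on `{k, k + 2}`. -/
noncomputable def perturbedVec (k : Fin 4) (δ ε : ℝ) : Fin 4 → ℂ :=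
  fun j ↦ ((![1 + δ, ε, 1 - δ, 0] (j - k) : ℝ) : ℂ)

theorem expec_Wabcd_perturbedVec_re {a b c d : ℝ} (hac : a + c = 1) (hbd : b + d = 2)
    (k : Fin 4) (δ ε : ℝ) :
    (expec (Wabcd a b c d) (tensorVec (perturbedVec k δ ε) (perturbedVec k (-δ) ε))).re =
      16 * c * δ ^ 2 - 4 * (d - b) * δ * ε ^ 2 + a * ε ^ 4 + 8 * δ ^ 2 * ε ^ 2 := by
  have unshift := expec_Wabcd_tensorVec_shift_re a b c d
    (fun j ↦ ((![1 + δ, ε, 1 - δ, 0] j : ℝ) : ℂ)) (fun j ↦ ((![1 + -δ, ε, 1 - -δ, 0] j : ℝ) : ℂ)) k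
  obtain rfl : a = 1 - c := by linarith
  obtain rfl : b = 2 - d := by linarith
  refine unshift.trans ?_
  simp only [expec_Wabcd_tensorVec_re, normSq_ofReal, ← ofReal_mul, ← ofReal_sum]
  simp [Fin.sum_univ_four]
  ring

theorem perturbedVec_tensor_diag (k : Fin 4) (δ ε : ℝ) (j : Fin 4) :
    tensorVec (perturbedVec k δ ε) (perturbedVec k (-δ) ε) (j, j) =
      (((1 - δ ^ 2 : ℝ) : ℂ) • (Pi.single (k, k) 1 + Pi.single (k + 2, k + 2) 1) +
        ((ε ^ 2 : ℝ) : ℂ) • Pi.single (k + 1, k + 1) 1 : Fin 4 × Fin 4 → ℂ) (j, j) := by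
  fin_cases k <;> fin_cases j <;> simp [tensorVec, perturbedVec] <;> ring

section Optimality

variable {a b c d lam : ℝ} {D : Matrix (Fin 4 × Fin 4) (Fin 4 × Fin 4) ℂ}

theorem mulVec_eq_zero_of_diag_eq_zero (hsum : a + b + c + d = 3) (hD : D.PosSemidef)
    (hlam : 0 < lam) (hW : IsBlockPositive (Wabcd a b c d - (lam : ℂ) • D))
    {v : Fin 4 × Fin 4 → ℂ} (hv : ∀ k, v (k, k) = 0) : D *ᵥ v = 0 := by
  have unimodular_mem (x : Fin 4 → ℂ) (hx : ∀ j, normSq (x j) = 1) :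
      tensorVec x (star x) ∈ LinearMap.ker D.mulVecLin :=
    hW.mulVec_tensorVec_eq_zero hD hlam (expec_Wabcd_unimodular_re hsum hx).le
  exact mem_of_diag_eq_zero (K := LinearMap.ker D.mulVecLin)
    (fun _ _ ↦ single_mem_of_unimodular_mem unimodular_mem) hv

theorem mulVec_tensorVec_perturbedVec (hac : a + c = 1) (hbd : b + d = 2) (hD : D.PosSemidef)
    (hlam : 0 < lam) (hW : IsBlockPositive (Wabcd a b c d - (lam : ℂ) • D)) (k : Fin 4)
    (δ ε : ℝ) :
    D *ᵥ tensorVec (perturbedVec k δ ε) (perturbedVec k (-δ) ε) =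
      D *ᵥ (((ε ^ 2 : ℝ) : ℂ) • Pi.single (k + 1, k + 1) 1) := by
  have decompose (δ ε : ℝ) : D *ᵥ tensorVec (perturbedVec k δ ε) (perturbedVec k (-δ) ε) =
      ((1 - δ ^ 2 : ℝ) : ℂ) • D *ᵥ (Pi.single (k, k) 1 + Pi.single (k + 2, k + 2) 1) +
        D *ᵥ (((ε ^ 2 : ℝ) : ℂ) • Pi.single (k + 1, k + 1) 1) := by
    rw [← mulVec_smul, ← mulVec_add, ← sub_eq_zero, ← mulVec_sub]
    exact mulVec_eq_zero_of_diag_eq_zero (by linarith) hD hlam hW fun j ↦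
      sub_eq_zero.2 (perturbedVec_tensor_diag k δ ε j)
  have pair_eq_zero : D *ᵥ (Pi.single (k, k) 1 + Pi.single (k + 2, k + 2) 1) = 0 := by
    have product_zero : D *ᵥ tensorVec (perturbedVec k 0 0) (perturbedVec k (-0) 0) = 0 :=
      hW.mulVec_tensorVec_eq_zero hD hlam
        ((expec_Wabcd_perturbedVec_re hac hbd k 0 0).trans (by ring)).le
    simpa using (decompose 0 0).symm.trans product_zero
  rw [decompose, pair_eq_zero, smul_zero, zero_add]

/- The coefficient of `ε⁴` is the quadratic `16 c κ² - 4 (d - b) κ + a` in `κ`; it has a double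
root, namely the `κ` with `8 c κ = d - b`, exactly when `4 a c = (d - b)²`. -/
theorem expec_Wabcd_perturbedVec_curve_re (hac : a + c = 1) (hbd : b + d = 2)
    (hdisc : 4 * a * c = (d - b) ^ 2) (hc : c ≠ 0) {κ : ℝ} (hκ : 8 * c * κ = d - b)
    (k : Fin 4) (ε : ℝ) :
    (expec (Wabcd a b c d) (tensorVec (perturbedVec k (κ * ε ^ 2) ε)
      (perturbedVec k (-(κ * ε ^ 2)) ε))).re = 8 * κ ^ 2 * ε ^ 6 := by
  have ha : a = 16 * c * κ ^ 2 := by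
    refine mul_left_cancel₀ hc ?_
    rw [← hκ] at hdisc
    linear_combination hdisc / 4
  rw [expec_Wabcd_perturbedVec_re hac hbd, ← hκ]
  linear_combination ε ^ 4 * ha

open Asymptotics Topology in
theorem mulVec_single_diag_eq_zero (hac : a + c = 1) (hbd : b + d = 2)
    (hdisc : 4 * a * c = (d - b) ^ 2) (hc : c ≠ 0) (hD : D.PosSemidef) (hlam : 0 < lam)
    (hW : IsBlockPositive (Wabcd a b c d - (lam : ℂ) • D)) (k : Fin 4) :
    D *ᵥ Pi.single (k, k) 1 = 0 := by
  obtain ⟨κ, hκ⟩ : ∃ κ, 8 * c * κ = d - b :=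
    ⟨(d - b) / (8 * c), mul_div_cancel₀ _ (mul_ne_zero (by norm_num) hc)⟩
  have curve_isLittleO : (fun ε : ℝ ↦ 8 * κ ^ 2 * ε ^ 6) =o[𝓝[≠] 0] fun ε ↦ (ε ^ 2) ^ 2 := by
    simp only [← pow_mul]
    exact ((isLittleO_pow_pow (by norm_num)).const_mul_left _).mono nhdsWithin_le_nhds
  have successor_eq_zero := hW.mulVec_eq_zero_of_isLittleO hD hlam
    (fun ε ↦ mulVec_tensorVec_perturbedVec hac hbd hD hlam hW (k - 1) (κ * ε ^ 2) ε)
    (by simpa only [expec_Wabcd_perturbedVec_curve_re hac hbd hdisc hc hκ] using curve_isLittleO)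
  rwa [sub_add_cancel] at successor_eq_zero

theorem eq_zero_of_isBlockPositive_Wabcd_sub_smul (hac : a + c = 1) (hbd : b + d = 2)
    (hdisc : 4 * a * c = (d - b) ^ 2) (hc : c ≠ 0) (hD : D.PosSemidef) (hlam : 0 < lam)
    (hW : IsBlockPositive (Wabcd a b c d - (lam : ℂ) • D)) : D = 0 := by
  refine ext_of_mulVec_single fun ⟨k, m⟩ ↦ ?_
  rw [zero_mulVec]
  by_cases hkm : k = m
  · rw [← hkm]
    exact mulVec_single_diag_eq_zero hac hbd hdisc hc hD hlam hW k
  · refine mulVec_eq_zero_of_diag_eq_zero (by linarith) hD hlam hW fun j ↦ ?_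
    have hj : (j, j) ≠ (k, m) := by
      rintro ⟨⟩
      exact hkm rfl
    exact Pi.single_eq_of_ne hj _

end Optimality

theorem WII_is_optimal_general (θ : ℝ) (hθ : Real.cos θ ≠ 1)
    (D : Matrix (Fin 4 × Fin 4) (Fin 4 × Fin 4) ℂ) (hD : D.PosSemidef) (hD0 : D ≠ 0)
    (lam : ℝ) (hlam : 0 < lam) :
    ∃ x y : Fin 4 → ℂ,
      (expec (WII θ - (lam : ℂ) • D) (tensorVec x y)).re < 0 := by
  by_contra! hW
  refine hD0 (eq_zero_of_isBlockPositive_Wabcd_sub_smul (by ring) (by ring) ?_ ?_ hD hlam hW)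
  · linear_combination -Real.sin_sq_add_cos_sq θ
  · contrapose! hθ
    linarith

theorem WII_is_optimal (θ : ℝ) (hθ : θ ∈ Set.Ioo 0 π)
    (D : Matrix (Fin 4 × Fin 4) (Fin 4 × Fin 4) ℂ) (hD : D.PosSemidef) (hD0 : D ≠ 0)
    (lam : ℝ) (hlam : 0 < lam) :
    ∃ x y : Fin 4 → ℂ,
      (expec (WII θ - (lam : ℂ) • D) (tensorVec x y)).re < 0 := by
  have hcos : Real.cos θ ≠ 1 := fun h ↦
    (Real.sin_pos_of_mem_Ioo hθ).ne' (Real.sin_eq_zero_iff_cos_eq.2 (.inl h))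
  exact WII_is_optimal_general θ hcos D hD hD0 lam hlam
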